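/- The operators on W satisfy the quantum Cartan–Kac anticommutation relation {E23, E32} = [h2] with h2 = E22 + E33: for every basis vector v(k, m11), (E23 E32 + E32 E23) v(k, m11) = [m12 + m22 + m32 − m11] · v(k, m11), where (m12, m22, m32) is the triple attached to k and m12 + m22 + m32 − m11 is the eigenvalue of E22 + E33 on v(k, m11). -/

import Mathlib

/-!
The defining formulas hold for every integer `m11`, not only for the allowed ones: where `v(k, m11)`
has left its range, each term on the right either has left its range too or has a vanishing
coefficient. Hence `{E23, E32}` can be computed in each sector without boundary cases. Put
`a = [m11 - m23 + 1]`, `b = [m13 - m11]`, `c = [m13 - m23 + 1]`, `A = [m23 + m33]` and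
`B = [m13 + m33 + 1]`. The off-diagonal terms cancel, and the diagonal coefficient is
`(a A + b B) / c` in all four sectors. Since `m12 + m22 + m32` does not depend on the sector, the
relation reduces to the three-term identity `[i] [n] + [j] [n + i + j] = [i + j] [n + j]`
at `i = m11 - m23 + 1`, `j = m13 - m11`, `n = m23 + m33`.
-/

noncomputable section

/-- The `q`-number `[x] = (q^x - q^(-x))/(q - q⁻¹)`. -/
def qn (q : ℝ) (x : ℤ) : ℝ := (q ^ x - q ^ (-x)) / (q - q⁻¹)

/-- The triple `(m12, m22, m32)` attached to the sector `k ∈ {0,1,2,3}`. -/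
def trip (m13 m23 m33 : ℤ) : Fin 4 → ℤ × ℤ × ℤ
  | 0 => (m13, m23, m33)
  | 1 => (m13, m23 - 1, m33 + 1)
  | 2 => (m13 - 1, m23, m33 + 1)
  | 3 => (m13 - 1, m23 - 1, m33 + 2)

def M12 (m13 m23 m33 : ℤ) (k : Fin 4) : ℤ := (trip m13 m23 m33 k).1
def M22 (m13 m23 m33 : ℤ) (k : Fin 4) : ℤ := (trip m13 m23 m33 k).2.1
def M32 (m13 m23 m33 : ℤ) (k : Fin 4) : ℤ := (trip m13 m23 m33 k).2.2

/-- `m11` is in the allowed range `m22 ≤ m11 ≤ m12` of the sector `k`. -/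
def InR (m13 m23 m33 : ℤ) (k : Fin 4) (x : ℤ) : Prop :=
  M22 m13 m23 m33 k ≤ x ∧ x ≤ M12 m13 m23 m33 k

instance (m13 m23 m33 : ℤ) (k : Fin 4) (x : ℤ) : Decidable (InR m13 m23 m33 k x) :=
  instDecidableAnd

/-- The index set of the basis `v(k, m11)` of `W`. -/
abbrev Idx (m13 m23 m33 : ℤ) : Type :=
  {p : Fin 4 × ℤ // InR m13 m23 m33 p.1 p.2}

/-- The module `W = W^q([m13,m23,m33])`, realized as the free complex vector
space on the basis `v(k, m11)`, `k ∈ {0,1,2,3}`, `m22 ≤ m11 ≤ m12`. -/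
abbrev Wsp (m13 m23 m33 : ℤ) : Type := Idx m13 m23 m33 →₀ ℂ

/-- The basis vector `v(k, m11)` (zero if `m11` is out of range). -/
def bv (m13 m23 m33 : ℤ) (k : Fin 4) (x : ℤ) : Wsp m13 m23 m33 :=
  if h : InR m13 m23 m33 k x then Finsupp.single ⟨(k, x), h⟩ 1 else 0

/-- The sector `V_k`, the span of the `v(k, ·)`. -/
def Vk (m13 m23 m33 : ℤ) (k : Fin 4) : Submodule ℂ (Wsp m13 m23 m33) :=
  Submodule.span ℂ (Set.range (bv m13 m23 m33 k))

/-- The Gel'fand--Zetlin realization of the induced `U_q[gl(2/1)]`-module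
`W^q([m13,m23,m33])`: seven linear operators acting on the basis `v(k, m11)`
by the stated formulas (terms with `m11` out of range being `0`). -/
structure GZ (q : ℝ) (m13 m23 m33 : ℤ) where
  E11 : Wsp m13 m23 m33 →ₗ[ℂ] Wsp m13 m23 m33
  E22 : Wsp m13 m23 m33 →ₗ[ℂ] Wsp m13 m23 m33
  E33 : Wsp m13 m23 m33 →ₗ[ℂ] Wsp m13 m23 m33
  E12 : Wsp m13 m23 m33 →ₗ[ℂ] Wsp m13 m23 m33
  E21 : Wsp m13 m23 m33 →ₗ[ℂ] Wsp m13 m23 m33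
  E23 : Wsp m13 m23 m33 →ₗ[ℂ] Wsp m13 m23 m33
  E32 : Wsp m13 m23 m33 →ₗ[ℂ] Wsp m13 m23 m33
  hE11 : ∀ (k : Fin 4) (x : ℤ), InR m13 m23 m33 k x →
    E11 (bv m13 m23 m33 k x) = (x : ℂ) • bv m13 m23 m33 k x
  hE22 : ∀ (k : Fin 4) (x : ℤ), InR m13 m23 m33 k x →
    E22 (bv m13 m23 m33 k x) =
      ((M12 m13 m23 m33 k + M22 m13 m23 m33 k - x : ℤ) : ℂ) • bv m13 m23 m33 k x
  hE33 : ∀ (k : Fin 4) (x : ℤ), InR m13 m23 m33 k x →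
    E33 (bv m13 m23 m33 k x) = ((M32 m13 m23 m33 k : ℤ) : ℂ) • bv m13 m23 m33 k x
  hE12 : ∀ (k : Fin 4) (x : ℤ), InR m13 m23 m33 k x →
    E12 (bv m13 m23 m33 k x) =
      ((Real.sqrt (qn q (M12 m13 m23 m33 k - x) * qn q (x - M22 m13 m23 m33 k + 1)) : ℝ) : ℂ) •
        bv m13 m23 m33 k (x + 1)
  hE21 : ∀ (k : Fin 4) (x : ℤ), InR m13 m23 m33 k x →
    E21 (bv m13 m23 m33 k x) =
      ((Real.sqrt (qn q (M12 m13 m23 m33 k - x + 1) * qn q (x - M22 m13 m23 m33 k)) : ℝ) : ℂ) •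
        bv m13 m23 m33 k (x - 1)
  hE23₀ : ∀ x : ℤ, InR m13 m23 m33 0 x → E23 (bv m13 m23 m33 0 x) = 0
  hE23₁ : ∀ x : ℤ, InR m13 m23 m33 1 x →
    E23 (bv m13 m23 m33 1 x) =
      ((Real.sqrt (qn q (x - m23 + 1) / qn q (m13 - m23 + 1)) * qn q (m23 + m33) : ℝ) : ℂ) •
        bv m13 m23 m33 0 x
  hE23₂ : ∀ x : ℤ, InR m13 m23 m33 2 x →
    E23 (bv m13 m23 m33 2 x) =
      ((Real.sqrt (qn q (m13 - x) / qn q (m13 - m23)) * qn q (m13 + m33 + 1) : ℝ) : ℂ) •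
        bv m13 m23 m33 0 x
  hE23₃ : ∀ x : ℤ, InR m13 m23 m33 3 x →
    E23 (bv m13 m23 m33 3 x) =
      ((q⁻¹ * Real.sqrt (qn q (m13 - x) / qn q (m13 - m23 + 1)) * qn q (m13 + m33 + 1) : ℝ) : ℂ) •
          bv m13 m23 m33 1 x
        - ((q⁻¹ * Real.sqrt (qn q (x - m23 + 1) * qn q (m13 - m23)) *
            (qn q (m23 + m33) / qn q (m13 - m23 + 1)) : ℝ) : ℂ) • bv m13 m23 m33 2 x
  hE32₀ : ∀ x : ℤ, InR m13 m23 m33 0 x →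
    E32 (bv m13 m23 m33 0 x) =
      ((Real.sqrt (qn q (x - m23 + 1) / qn q (m13 - m23 + 1)) : ℝ) : ℂ) • bv m13 m23 m33 1 x
        + ((Real.sqrt (qn q (m13 - x) * qn q (m13 - m23)) / qn q (m13 - m23 + 1) : ℝ) : ℂ) •
            bv m13 m23 m33 2 x
  hE32₁ : ∀ x : ℤ, InR m13 m23 m33 1 x →
    E32 (bv m13 m23 m33 1 x) =
      ((q * Real.sqrt (qn q (m13 - x) / qn q (m13 - m23 + 1)) : ℝ) : ℂ) • bv m13 m23 m33 3 x
  hE32₂ : ∀ x : ℤ, InR m13 m23 m33 2 x →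
    E32 (bv m13 m23 m33 2 x) =
      -(((q * Real.sqrt (qn q (x - m23 + 1) / qn q (m13 - m23)) : ℝ) : ℂ) • bv m13 m23 m33 3 x)
  hE32₃ : ∀ x : ℤ, InR m13 m23 m33 3 x → E32 (bv m13 m23 m33 3 x) = 0

section SquareRoots

variable {a b : ℝ}

theorem sqrt_mul_mul_sqrt_div {d : ℝ} (ha : 0 ≤ a) (hd : 0 ≤ d) (h : d = 0 → a = 0) :
    √(a * d) * √(a / d) = a := by
  rw [← Real.sqrt_mul (mul_nonneg ha hd), mul_assoc, mul_div_cancel_of_imp' h,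
    Real.sqrt_mul_self ha]

theorem sqrt_div_mul_sqrt_mul_comm (ha : 0 ≤ a) (hb : 0 ≤ b) (c d : ℝ) :
    √(a / c) * √(b * d) = √(b / c) * √(a * d) := by
  rw [Real.sqrt_div ha, Real.sqrt_div hb, Real.sqrt_mul ha, Real.sqrt_mul hb]
  ring

theorem sqrt_div_mul_sqrt_div_comm (ha : 0 ≤ a) (hb : 0 ≤ b) (c d : ℝ) :
    √(a / c) * √(b / d) = √(b / c) * √(a / d) := by
  simpa only [div_eq_mul_inv] using sqrt_div_mul_sqrt_mul_comm ha hb c d⁻¹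

end SquareRoots

section QNumbers

variable {q : ℝ}

theorem qn_zero (q : ℝ) : qn q 0 = 0 := by simp [qn]

theorem qn_neg (q : ℝ) (x : ℤ) : qn q (-x) = -qn q x := by
  rw [qn, qn, neg_neg, ← neg_div, neg_sub]

theorem qn_pos (hq : 0 < q) (hq1 : q ≠ 1) {x : ℤ} (hx : 0 < x) : 0 < qn q x := by
  have hneg : -x < x := by omega
  rcases lt_or_gt_of_ne hq1 with h | h
  · exact div_pos_of_neg_of_neg (sub_neg.2 (zpow_lt_zpow_right_of_lt_one₀ hq h hneg))
      (sub_neg.2 (h.trans ((one_lt_inv₀ hq).2 h)))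
  · exact div_pos (sub_pos.2 (zpow_lt_zpow_right₀ h hneg))
      (sub_pos.2 ((inv_lt_one_of_one_lt₀ h).trans h))

theorem qn_nonneg (hq : 0 < q) (hq1 : q ≠ 1) {x : ℤ} (hx : 0 ≤ x) : 0 ≤ qn q x := by
  rcases hx.eq_or_lt with rfl | h
  · exact (qn_zero q).ge
  · exact (qn_pos hq hq1 h).le

theorem qn_eq_zero_iff (hq : 0 < q) (hq1 : q ≠ 1) {x : ℤ} : qn q x = 0 ↔ x = 0 := by
  refine ⟨fun h => ?_, fun h => h ▸ qn_zero q⟩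
  by_contra hx
  rcases lt_or_gt_of_ne hx with hneg | hpos
  · exact (qn_pos hq hq1 (neg_pos.2 hneg)).ne' (by rw [qn_neg, h, neg_zero])
  · exact (qn_pos hq hq1 hpos).ne' h

theorem qn_mul_add_qn_mul (hq : q ≠ 0) (i j n : ℤ) :
    qn q i * qn q n + qn q j * qn q (n + i + j) = qn q (i + j) * qn q (n + j) := by
  simp only [qn, div_mul_div_comm, ← add_div]
  congr 1
  simp only [sub_mul, mul_sub, ← zpow_add₀ hq]
  ring_nf

theorem qn_mul_add_qn_mul_div (hq : 0 < q) (hq1 : q ≠ 1) {m13 m23 : ℤ} (hm : m23 ≤ m13)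
    (m33 x : ℤ) :
    (qn q (x - m23 + 1) * qn q (m23 + m33) + qn q (m13 - x) * qn q (m13 + m33 + 1)) /
      qn q (m13 - m23 + 1) = qn q (m13 + m23 + m33 - x) := by
  have hc : qn q (m13 - m23 + 1) ≠ 0 := (qn_pos hq hq1 (by omega)).ne'
  rw [div_eq_iff hc, mul_comm (qn q (m13 + m23 + m33 - x))]
  convert qn_mul_add_qn_mul hq.ne' (x - m23 + 1) (m13 - x) (m23 + m33) using 3 <;> ring_nf

end QNumbers

section Sectors

variable {m13 m23 m33 : ℤ} {k : Fin 4} {x : ℤ}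

theorem M12_add_M22_add_M32 (m13 m23 m33 : ℤ) (k : Fin 4) :
    M12 m13 m23 m33 k + M22 m13 m23 m33 k + M32 m13 m23 m33 k = m13 + m23 + m33 := by
  fin_cases k <;> simp only [M12, M22, M32, trip] <;> ring

theorem inR_zero : InR m13 m23 m33 0 x ↔ m23 ≤ x ∧ x ≤ m13 := Iff.rfl

theorem inR_one : InR m13 m23 m33 1 x ↔ m23 - 1 ≤ x ∧ x ≤ m13 := Iff.rfl

theorem inR_two : InR m13 m23 m33 2 x ↔ m23 ≤ x ∧ x ≤ m13 - 1 := Iff.rfl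

theorem inR_three : InR m13 m23 m33 3 x ↔ m23 - 1 ≤ x ∧ x ≤ m13 - 1 := Iff.rfl

theorem bv_eq_zero (h : ¬InR m13 m23 m33 k x) : bv m13 m23 m33 k x = 0 := dif_neg h

theorem smul_bv_eq_zero {r : ℂ} (h : InR m13 m23 m33 k x → r = 0) :
    r • bv m13 m23 m33 k x = 0 := by
  by_cases hx : InR m13 m23 m33 k x
  · rw [h hx, zero_smul]
  · rw [bv_eq_zero hx, smul_zero]

end Sectors

namespace GZ

variable {q : ℝ} {m13 m23 m33 : ℤ} (R : GZ q m13 m23 m33) (x : ℤ)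

theorem E23_bv_zero : R.E23 (bv m13 m23 m33 0 x) = 0 := by
  by_cases hx : InR m13 m23 m33 0 x
  · exact R.hE23₀ x hx
  · rw [bv_eq_zero hx, map_zero]

theorem E23_bv_one :
    R.E23 (bv m13 m23 m33 1 x) =
      ((√(qn q (x - m23 + 1) / qn q (m13 - m23 + 1)) * qn q (m23 + m33) : ℝ) : ℂ) •
        bv m13 m23 m33 0 x := by
  by_cases hx : InR m13 m23 m33 1 x
  · exact R.hE23₁ x hx
  · rw [bv_eq_zero hx, map_zero, bv_eq_zero (by rw [inR_one] at hx; rw [inR_zero]; omega),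
      smul_zero]

theorem E23_bv_two :
    R.E23 (bv m13 m23 m33 2 x) =
      ((√(qn q (m13 - x) / qn q (m13 - m23)) * qn q (m13 + m33 + 1) : ℝ) : ℂ) •
        bv m13 m23 m33 0 x := by
  by_cases hx : InR m13 m23 m33 2 x
  · exact R.hE23₂ x hx
  · rw [bv_eq_zero hx, map_zero, smul_bv_eq_zero]
    intro h0
    obtain rfl : x = m13 := by rw [inR_two] at hx; rw [inR_zero] at h0; omega
    simp [qn_zero]

theorem E23_bv_three :
    R.E23 (bv m13 m23 m33 3 x) =
      ((q⁻¹ * √(qn q (m13 - x) / qn q (m13 - m23 + 1)) * qn q (m13 + m33 + 1) : ℝ) : ℂ) •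
          bv m13 m23 m33 1 x
        - ((q⁻¹ * √(qn q (x - m23 + 1) * qn q (m13 - m23)) *
            (qn q (m23 + m33) / qn q (m13 - m23 + 1)) : ℝ) : ℂ) • bv m13 m23 m33 2 x := by
  by_cases hx : InR m13 m23 m33 3 x
  · exact R.hE23₃ x hx
  · have h2 : ¬InR m13 m23 m33 2 x := by rw [inR_three] at hx; rw [inR_two]; omega
    rw [bv_eq_zero hx, bv_eq_zero h2, map_zero, smul_zero, sub_zero, smul_bv_eq_zero]
    intro h1
    obtain rfl : x = m13 := by rw [inR_three] at hx; rw [inR_one] at h1; omega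
    simp [qn_zero]

theorem E32_bv_zero :
    R.E32 (bv m13 m23 m33 0 x) =
      ((√(qn q (x - m23 + 1) / qn q (m13 - m23 + 1)) : ℝ) : ℂ) • bv m13 m23 m33 1 x
        + ((√(qn q (m13 - x) * qn q (m13 - m23)) / qn q (m13 - m23 + 1) : ℝ) : ℂ) •
            bv m13 m23 m33 2 x := by
  by_cases hx : InR m13 m23 m33 0 x
  · exact R.hE32₀ x hx
  · have h2 : ¬InR m13 m23 m33 2 x := by rw [inR_zero] at hx; rw [inR_two]; omega
    rw [bv_eq_zero hx, bv_eq_zero h2, map_zero, smul_zero, add_zero, smul_bv_eq_zero]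
    intro h1
    obtain rfl : x = m23 - 1 := by rw [inR_zero] at hx; rw [inR_one] at h1; omega
    simp [qn_zero]

theorem E32_bv_one :
    R.E32 (bv m13 m23 m33 1 x) =
      ((q * √(qn q (m13 - x) / qn q (m13 - m23 + 1)) : ℝ) : ℂ) • bv m13 m23 m33 3 x := by
  by_cases hx : InR m13 m23 m33 1 x
  · exact R.hE32₁ x hx
  · rw [bv_eq_zero hx, map_zero, bv_eq_zero (by rw [inR_one] at hx; rw [inR_three]; omega),
      smul_zero]

theorem E32_bv_two :
    R.E32 (bv m13 m23 m33 2 x) =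
      -(((q * √(qn q (x - m23 + 1) / qn q (m13 - m23)) : ℝ) : ℂ) • bv m13 m23 m33 3 x) := by
  by_cases hx : InR m13 m23 m33 2 x
  · exact R.hE32₂ x hx
  · rw [bv_eq_zero hx, map_zero, smul_bv_eq_zero, neg_zero]
    intro h3
    obtain rfl : x = m23 - 1 := by rw [inR_two] at hx; rw [inR_three] at h3; omega
    simp [qn_zero]

theorem E32_bv_three : R.E32 (bv m13 m23 m33 3 x) = 0 := by
  by_cases hx : InR m13 m23 m33 3 x
  · exact R.hE32₃ x hx
  · rw [bv_eq_zero hx, map_zero]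

theorem E23_E32_bv_one (hq : q ≠ 0) :
    R.E23 (R.E32 (bv m13 m23 m33 1 x)) =
      ((√(qn q (m13 - x) / qn q (m13 - m23 + 1)) ^ 2 * qn q (m13 + m33 + 1) : ℝ) : ℂ) •
          bv m13 m23 m33 1 x
        - ((√(qn q (m13 - x) / qn q (m13 - m23 + 1)) * √(qn q (x - m23 + 1) * qn q (m13 - m23)) *
            (qn q (m23 + m33) / qn q (m13 - m23 + 1)) : ℝ) : ℂ) • bv m13 m23 m33 2 x := by
  rw [E32_bv_one, map_smul, E23_bv_three]
  match_scalars <;> norm_cast <;> field_simp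

theorem E23_E32_bv_two (hq : q ≠ 0) :
    R.E23 (R.E32 (bv m13 m23 m33 2 x)) =
      ((√(qn q (x - m23 + 1) / qn q (m13 - m23)) * √(qn q (x - m23 + 1) * qn q (m13 - m23)) *
          (qn q (m23 + m33) / qn q (m13 - m23 + 1)) : ℝ) : ℂ) • bv m13 m23 m33 2 x
        - ((√(qn q (x - m23 + 1) / qn q (m13 - m23)) * √(qn q (m13 - x) / qn q (m13 - m23 + 1)) *
            qn q (m13 + m33 + 1) : ℝ) : ℂ) • bv m13 m23 m33 1 x := by
  rw [E32_bv_two, map_neg, map_smul, E23_bv_three]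
  match_scalars <;> norm_cast <;> field_simp

theorem E32_E23_bv_three (hq : q ≠ 0) :
    R.E32 (R.E23 (bv m13 m23 m33 3 x)) =
      ((√(qn q (m13 - x) / qn q (m13 - m23 + 1)) ^ 2 * qn q (m13 + m33 + 1) +
        √(qn q (x - m23 + 1) * qn q (m13 - m23)) * √(qn q (x - m23 + 1) / qn q (m13 - m23)) *
          (qn q (m23 + m33) / qn q (m13 - m23 + 1)) : ℝ) : ℂ) • bv m13 m23 m33 3 x := by
  rw [E23_bv_three, map_sub, map_smul, map_smul, E32_bv_one, E32_bv_two]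
  match_scalars
  norm_cast
  field_simp
  ring

variable {x}

theorem anticomm_E23_E32_bv_zero (hq : 0 < q) (hq1 : q ≠ 1) (hx : InR m13 m23 m33 0 x) :
    R.E23 (R.E32 (bv m13 m23 m33 0 x)) + R.E32 (R.E23 (bv m13 m23 m33 0 x)) =
      (qn q (m13 + m23 + m33 - x) : ℂ) • bv m13 m23 m33 0 x := by
  rw [inR_zero] at hx
  have ha : 0 ≤ qn q (x - m23 + 1) := qn_nonneg hq hq1 (by omega)
  have hb : 0 ≤ qn q (m13 - x) := qn_nonneg hq hq1 (by omega)
  have hc : 0 ≤ qn q (m13 - m23 + 1) := qn_nonneg hq hq1 (by omega)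
  have hd : 0 ≤ qn q (m13 - m23) := qn_nonneg hq hq1 (by omega)
  have hdb : qn q (m13 - m23) = 0 → qn q (m13 - x) = 0 := by
    rw [qn_eq_zero_iff hq hq1, qn_eq_zero_iff hq hq1]
    omega
  have hac := Real.sq_sqrt (div_nonneg ha hc)
  have hbd := sqrt_mul_mul_sqrt_div hb hd hdb
  rw [E23_bv_zero, map_zero, add_zero, E32_bv_zero, map_add, map_smul, map_smul, E23_bv_one,
    E23_bv_two, ← qn_mul_add_qn_mul_div hq hq1 (by omega)]
  match_scalars
  norm_cast
  linear_combination qn q (m23 + m33) * hac + qn q (m13 + m33 + 1) / qn q (m13 - m23 + 1) * hbd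

theorem anticomm_E23_E32_bv_one (hq : 0 < q) (hq1 : q ≠ 1) (hm : m23 ≤ m13)
    (hx : InR m13 m23 m33 1 x) :
    R.E23 (R.E32 (bv m13 m23 m33 1 x)) + R.E32 (R.E23 (bv m13 m23 m33 1 x)) =
      (qn q (m13 + m23 + m33 - x) : ℂ) • bv m13 m23 m33 1 x := by
  rw [inR_one] at hx
  have ha : 0 ≤ qn q (x - m23 + 1) := qn_nonneg hq hq1 (by omega)
  have hb : 0 ≤ qn q (m13 - x) := qn_nonneg hq hq1 (by omega)
  have hc : 0 ≤ qn q (m13 - m23 + 1) := qn_nonneg hq hq1 (by omega)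
  have hac := Real.sq_sqrt (div_nonneg ha hc)
  have hbc := Real.sq_sqrt (div_nonneg hb hc)
  have hoff := sqrt_div_mul_sqrt_mul_comm ha hb (qn q (m13 - m23 + 1)) (qn q (m13 - m23))
  rw [R.E23_E32_bv_one x hq.ne', E23_bv_one, map_smul, E32_bv_zero,
    ← qn_mul_add_qn_mul_div hq hq1 hm]
  match_scalars <;> norm_cast
  · linear_combination qn q (m23 + m33) * hac + qn q (m13 + m33 + 1) * hbc
  · linear_combination qn q (m23 + m33) / qn q (m13 - m23 + 1) * hoff

theorem anticomm_E23_E32_bv_two (hq : 0 < q) (hq1 : q ≠ 1) (hx : InR m13 m23 m33 2 x) :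
    R.E23 (R.E32 (bv m13 m23 m33 2 x)) + R.E32 (R.E23 (bv m13 m23 m33 2 x)) =
      (qn q (m13 + m23 + m33 - x) : ℂ) • bv m13 m23 m33 2 x := by
  rw [inR_two] at hx
  have ha : 0 ≤ qn q (x - m23 + 1) := qn_nonneg hq hq1 (by omega)
  have hb : 0 ≤ qn q (m13 - x) := qn_nonneg hq hq1 (by omega)
  have hd : 0 < qn q (m13 - m23) := qn_pos hq hq1 (by omega)
  have had := sqrt_mul_mul_sqrt_div ha hd.le fun h => absurd h hd.ne'
  have hbd := sqrt_mul_mul_sqrt_div hb hd.le fun h => absurd h hd.ne'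
  have hoff := sqrt_div_mul_sqrt_div_comm ha hb (qn q (m13 - m23 + 1)) (qn q (m13 - m23))
  rw [R.E23_E32_bv_two x hq.ne', E23_bv_two, map_smul, E32_bv_zero,
    ← qn_mul_add_qn_mul_div hq hq1 (by omega)]
  match_scalars <;> norm_cast
  · linear_combination qn q (m23 + m33) / qn q (m13 - m23 + 1) * had +
      qn q (m13 + m33 + 1) / qn q (m13 - m23 + 1) * hbd
  · linear_combination qn q (m13 + m33 + 1) * hoff

theorem anticomm_E23_E32_bv_three (hq : 0 < q) (hq1 : q ≠ 1) (hx : InR m13 m23 m33 3 x) :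
    R.E23 (R.E32 (bv m13 m23 m33 3 x)) + R.E32 (R.E23 (bv m13 m23 m33 3 x)) =
      (qn q (m13 + m23 + m33 - x) : ℂ) • bv m13 m23 m33 3 x := by
  rw [inR_three] at hx
  have ha : 0 ≤ qn q (x - m23 + 1) := qn_nonneg hq hq1 (by omega)
  have hb : 0 ≤ qn q (m13 - x) := qn_nonneg hq hq1 (by omega)
  have hc : 0 ≤ qn q (m13 - m23 + 1) := qn_nonneg hq hq1 (by omega)
  have hd : 0 ≤ qn q (m13 - m23) := qn_nonneg hq hq1 (by omega)
  have hda : qn q (m13 - m23) = 0 → qn q (x - m23 + 1) = 0 := by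
    rw [qn_eq_zero_iff hq hq1, qn_eq_zero_iff hq hq1]
    omega
  have hbc := Real.sq_sqrt (div_nonneg hb hc)
  have had := sqrt_mul_mul_sqrt_div ha hd hda
  rw [E32_bv_three, map_zero, zero_add, R.E32_E23_bv_three x hq.ne',
    ← qn_mul_add_qn_mul_div hq hq1 (by omega)]
  congr 2
  linear_combination qn q (m23 + m33) / qn q (m13 - m23 + 1) * had + qn q (m13 + m33 + 1) * hbc

end GZ

/-- The operators on `W` satisfy the quantum Cartan--Kac
anticommutation relation `{E23, E32} = [h2]` with `h2 = E22 + E33`: on every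
basis vector `v(k, m11)`, `(E23 E32 + E32 E23) v(k,m11) =
[m12 + m22 + m32 − m11] • v(k,m11)`, where `(m12,m22,m32)` is the triple
attached to `k` (hence `m12 + m22 + m32 − m11` is the eigenvalue of
`E22 + E33` on `v(k,m11)`). -/
theorem stmt_6 (q : ℝ) (hq : 0 < q) (hq1 : q ≠ 1)
    (m13 m23 m33 : ℤ) (hm : m23 ≤ m13) (R : GZ q m13 m23 m33) :
    ∀ (k : Fin 4) (x : ℤ), InR m13 m23 m33 k x →
      (R.E23 ∘ₗ R.E32 + R.E32 ∘ₗ R.E23) (bv m13 m23 m33 k x) =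
        ((qn q (M12 m13 m23 m33 k + M22 m13 m23 m33 k + M32 m13 m23 m33 k - x) : ℝ) : ℂ) •
          bv m13 m23 m33 k x := by
  intro k x hx
  rw [M12_add_M22_add_M32, LinearMap.add_apply, LinearMap.comp_apply, LinearMap.comp_apply]
  fin_cases k
  · exact R.anticomm_E23_E32_bv_zero hq hq1 hx
  · exact R.anticomm_E23_E32_bv_one hq hq1 hm hx
  · exact R.anticomm_E23_E32_bv_two hq hq1 hx
  · exact R.anticomm_E23_E32_bv_three hq hq1 hx
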